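/- Let (B, A, i, e, l) be a cleft extension of abelian categories in which A and B have arbitrary coproducts, and suppose e has a right adjoint functor r. Let P₁ →σ P₀ → B → 0 be a projective presentation of B in B. Then l(B) is a silting object of A with respect to l(σ) if and only if B is a silting object of B with respect to σ and F(B) ∈ Gen(B), where F(B) := e(ker(μ_{i(B)})) and μ is the counit of (l, e). -/

import Mathlib

open CategoryTheory Limits

universe v u₁ u₂

/-- For a morphism `σ : X ⟶ Y` in a category `C`, `DClass σ` is the class of objects `L`
such that `Hom_C(σ, L) : Hom_C(Y, L) → Hom_C(X, L)` is surjective. -/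
def DClass {C : Type u₁} [Category.{v} C] {X Y : C} (σ : X ⟶ Y) (L : C) : Prop :=
  Function.Surjective (fun g : Y ⟶ L => σ ≫ g)

/-- `Gen X` is the class of epimorphic images of coproducts of copies of `X`. -/
def Gen {C : Type u₁} [Category.{v} C] [HasCoproducts.{v} C] (X L : C) : Prop :=
  ∃ (I : Type v) (p : (∐ fun _ : I => X) ⟶ L), Epi p

/-- Given a morphism `σ` occurring in a projective presentation `P₁ ⟶ P₀ ⟶ X ⟶ 0`, the object
`X` is silting with respect to `σ` if `Gen X = D_σ`. -/
def IsSilting {C : Type u₁} [Category.{v} C] [HasCoproducts.{v} C]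
    {P₁ P₀ : C} (σ : P₁ ⟶ P₀) (X : C) : Prop :=
  ∀ L : C, Gen X L ↔ DClass σ L

/-!
Adjunction gives `M ∈ D_{l(σ)} ↔ e(M) ∈ D_σ`. The triangle identity splits `e(μ_{i(B)})`, so that
`e(l(B)) ≅ F(B) ⊕ B`, and `D_σ` is closed under finite direct sums and direct summands.

If `l(B)` is silting, then `Gen(B) = D_σ` follows by transporting along `l` (with `L` a direct
summand of `e(l(L))`) and along `i` (with `Hom(l(B), i(L)) ≅ Hom(B, L)`), and `e(l(B)) ∈ D_σ` gives
`F(B) ∈ D_σ = Gen(B)`. Conversely, `F(B) ∈ Gen(B)` yields `e(l(B)) ∈ D_σ = Gen(B)`, hence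
`M ∈ Gen(l(B)) ↔ e(M) ∈ Gen(B)`: one direction applies `e`, the other applies `l` and then the
counit, which is epic since `e` is faithful.
-/

section Gen

variable {C : Type u₁} [Category.{v} C] [HasCoproducts.{v} C] {X Y L : C}

theorem gen_iff_jointly_epi :
    Gen X L ↔ ∀ ⦃Z : C⦄ (g h : L ⟶ Z), (∀ f : X ⟶ L, f ≫ g = f ≫ h) → g = h := by
  constructor
  · rintro ⟨I, p, _⟩ Z g h hgh
    rw [← cancel_epi p]
    exact Sigma.hom_ext _ _ fun b => by
      simpa only [Category.assoc] using hgh (Sigma.ι (fun _ : I => X) b ≫ p)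
  · intro hL
    refine ⟨X ⟶ L, Sigma.desc id, ⟨fun g h hgh => hL g h fun f => ?_⟩⟩
    simpa using Sigma.ι (fun _ : X ⟶ L => X) f ≫= hgh

theorem Gen.refl (X : C) : Gen X X :=
  gen_iff_jointly_epi.2 fun _ g h hgh => by simpa only [Category.id_comp] using hgh (𝟙 X)

theorem Gen.trans (hY : Gen X Y) (hL : Gen Y L) : Gen X L := by
  rw [gen_iff_jointly_epi] at *
  refine fun Z g h hgh => hL g h fun f => hY _ _ fun a => ?_
  simpa only [Category.assoc] using hgh (a ≫ f)

theorem Gen.of_epi (hY : Gen X Y) (p : Y ⟶ L) [Epi p] : Gen X L := by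
  obtain ⟨I, q, _⟩ := hY
  exact ⟨I, q ≫ p, epi_comp q p⟩

theorem Gen.map {D : Type u₂} [Category.{v} D] [HasCoproducts.{v} D] (hL : Gen X L) (F : C ⥤ D)
    [F.PreservesEpimorphisms] [∀ I : Type v, PreservesColimitsOfShape (Discrete I) F] :
    Gen (F.obj X) (F.obj L) := by
  obtain ⟨I, p, _⟩ := hL
  exact ⟨I, sigmaComparison F (fun _ : I => X) ≫ F.map p, inferInstance⟩

end Gen

section DClass

variable {C : Type u₁} [Category.{v} C] {X Y : C} {σ : X ⟶ Y} {L M : C}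

theorem DClass.of_retract (hL : DClass σ L) (ρ : Retract M L) : DClass σ M := by
  intro f
  obtain ⟨g, hg : σ ≫ g = f ≫ ρ.i⟩ := hL (f ≫ ρ.i)
  exact ⟨g ≫ ρ.r, by simp [reassoc_of% hg]⟩

theorem dclass_iff_of_iso (φ : L ≅ M) : DClass σ L ↔ DClass σ M :=
  ⟨fun hL => hL.of_retract (.ofIso φ.symm), fun hM => hM.of_retract (.ofIso φ)⟩

theorem dclass_biprod_iff [HasZeroMorphisms C] [HasBinaryBiproduct L M] :
    DClass σ (L ⊞ M) ↔ DClass σ L ∧ DClass σ M := by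
  constructor
  · exact fun h => ⟨h.of_retract ⟨biprod.inl, biprod.fst, biprod.inl_fst⟩,
      h.of_retract ⟨biprod.inr, biprod.snd, biprod.inr_snd⟩⟩
  · rintro ⟨hL, hM⟩ f
    obtain ⟨a, ha : σ ≫ a = f ≫ biprod.fst⟩ := hL (f ≫ biprod.fst)
    obtain ⟨b, hb : σ ≫ b = f ≫ biprod.snd⟩ := hM (f ≫ biprod.snd)
    exact ⟨biprod.lift a b, biprod.hom_ext _ _ (by simp [ha]) (by simp [hb])⟩

end DClass

section Adjunction

variable {A : Type u₁} {B : Type u₂} [Category.{v} A] [Category.{v} B]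
  {i : B ⥤ A} {e : A ⥤ B} {l : B ⥤ A} {X Y : B} {σ : X ⟶ Y}

theorem dclass_map_iff (adj : l ⊣ e) {M : A} : DClass (l.map σ) M ↔ DClass σ (e.obj M) := by
  have homEquiv_natural :
      adj.homEquiv X M ∘ (fun g => l.map σ ≫ g) = (fun g => σ ≫ g) ∘ adj.homEquiv Y M :=
    funext fun g => adj.homEquiv_naturality_left σ g
  rw [DClass, ← (adj.homEquiv X M).comp_surjective, homEquiv_natural,
    (adj.homEquiv Y M).surjective_comp, DClass]

theorem Gen.of_faithful_rightAdjoint [HasCoproducts.{v} A] [HasCoproducts.{v} B] [e.Faithful]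
    (adj : l ⊣ e) {M : A} (hM : Gen X (e.obj M)) : Gen (l.obj X) M :=
  haveI := adj.isLeftAdjoint
  (hM.map l).of_epi (adj.counit.app M)

theorem Gen.of_section_rightAdjoint [HasCoproducts.{v} A] [HasCoproducts.{v} B]
    (adj : l ⊣ e) (η : i ⋙ e ≅ 𝟭 B) {L : B} (hL : Gen (l.obj X) (i.obj L)) : Gen X L := by
  rw [gen_iff_jointly_epi] at *
  intro Z g h hgh
  have map_map (k : L ⟶ Z) : e.map (i.map k) = η.hom.app L ≫ k ≫ η.inv.app Z :=
    (NatIso.naturality_2 η k).symm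
  have map_eq : i.map g = i.map h := hL _ _ fun f => (adj.homEquiv _ _).injective <| by
    simpa only [adj.homEquiv_naturality_right, map_map, Category.assoc] using
      hgh (adj.homEquiv _ _ f ≫ η.hom.app L) =≫ η.inv.app Z
  have comp_inv_eq : g ≫ η.inv.app Z = h ≫ η.inv.app Z := by
    simpa only [map_map, cancel_epi] using congrArg e.map map_eq
  exact (cancel_mono (η.inv.app Z)).1 comp_inv_eq

/-- `L` as a direct summand of `e (l L)`: since `L ≅ e (i L)`, this is the triangle identity for
`l ⊣ e` at `i L`. -/
def retractObjObj (adj : l ⊣ e) (η : i ⋙ e ≅ 𝟭 B) (L : B) : Retract L (e.obj (l.obj L)) :=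
  let unitRetract : Retract (e.obj (i.obj L)) (e.obj (l.obj (e.obj (i.obj L)))) :=
    ⟨adj.unit.app _, e.map (adj.counit.app _), adj.right_triangle_components _⟩
  (Retract.ofIso (η.app L).symm).trans <|
    unitRetract.trans <| .ofIso (e.mapIso (l.mapIso (η.app L)))

variable [Preadditive A] [Preadditive B] [HasBinaryBiproducts B]

/-- The decomposition of `e (l (e M))` into the kernel and the target of `e (μ_M)`, where `μ` is the
counit of `l ⊣ e`: by the triangle identity the unit at `e M` is a section of `e (μ_M)`. -/
noncomputable def isoKernelCounitBiprod (adj : l ⊣ e) (M : A)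
    [HasKernel (adj.counit.app M)] :
    e.obj (l.obj (e.obj M)) ≅ e.obj (kernel (adj.counit.app M)) ⊞ e.obj M :=
  haveI := adj.isRightAdjoint
  haveI : IsSplitEpi (e.map (adj.counit.app M)) :=
    .mk' ⟨adj.unit.app (e.obj M), adj.right_triangle_components M⟩
  biprod.uniqueUpToIso _ _ <| isBilimitBinaryBiconeOfIsSplitEpiOfKernel <|
    KernelFork.mapIsLimit _ (kernelIsKernel (adj.counit.app M)) e

theorem dclass_obj_obj_iff_kernel_counit (adj : l ⊣ e) (η : i ⋙ e ≅ 𝟭 B) {L : B}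
    [HasKernel (adj.counit.app (i.obj L))] :
    DClass σ (e.obj (l.obj L)) ↔
      DClass σ (e.obj (kernel (adj.counit.app (i.obj L)))) ∧ DClass σ L := by
  calc
    _ ↔ DClass σ (e.obj (l.obj (e.obj (i.obj L)))) :=
      (dclass_iff_of_iso (e.mapIso (l.mapIso (η.app L)))).symm
    _ ↔ DClass σ (e.obj (kernel (adj.counit.app (i.obj L)))) ∧ DClass σ (e.obj (i.obj L)) :=
      (dclass_iff_of_iso (isoKernelCounitBiprod adj (i.obj L))).trans dclass_biprod_iff
    _ ↔ _ := and_congr_right' (dclass_iff_of_iso (η.app L))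

end Adjunction

section Silting

variable {A : Type u₁} {B : Type u₂} [Category.{v} A] [Category.{v} B]
  [HasCoproducts.{v} A] [HasCoproducts.{v} B]
  {i : B ⥤ A} {e : A ⥤ B} {l : B ⥤ A} {P₁ P₀ X : B} {σ : P₁ ⟶ P₀}

theorem IsSilting.of_map (adj : l ⊣ e) (η : i ⋙ e ≅ 𝟭 B)
    (hl : IsSilting (l.map σ) (l.obj X)) : IsSilting σ X := by
  have := adj.isLeftAdjoint
  refine fun L => ⟨fun hL => ?_, fun hL => ?_⟩
  · have : DClass σ (e.obj (l.obj L)) := (dclass_map_iff adj).1 ((hl _).1 (hL.map l))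
    exact this.of_retract (retractObjObj adj η L)
  · have : DClass σ (e.obj (i.obj L)) := (dclass_iff_of_iso (η.app L)).2 hL
    exact .of_section_rightAdjoint adj η ((hl _).2 ((dclass_map_iff adj).2 this))

theorem IsSilting.map [e.Faithful] [e.PreservesEpimorphisms]
    [∀ I : Type v, PreservesColimitsOfShape (Discrete I) e] (adj : l ⊣ e)
    (hσ : IsSilting σ X) (hX : Gen X (e.obj (l.obj X))) : IsSilting (l.map σ) (l.obj X) := by
  intro M
  rw [dclass_map_iff adj, ← hσ]
  exact ⟨fun hM => hX.trans (hM.map e), .of_faithful_rightAdjoint adj⟩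

theorem stmt16_general [Preadditive A] [Preadditive B] [e.Faithful] [e.PreservesEpimorphisms]
    [∀ I : Type v, PreservesColimitsOfShape (Discrete I) e] (adj : l ⊣ e) (η : i ⋙ e ≅ 𝟭 B)
    [HasKernel (adj.counit.app (i.obj X))] :
    IsSilting (l.map σ) (l.obj X) ↔
      IsSilting σ X ∧ Gen X (e.obj (kernel (adj.counit.app (i.obj X)))) := by
  have : HasFiniteCoproducts B := hasFiniteCoproducts_of_hasCoproducts B
  have : HasBinaryBiproducts B := .of_hasBinaryCoproducts
  constructor
  · intro hl
    have hσ : IsSilting σ X := hl.of_map adj η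
    have hX : DClass σ (e.obj (l.obj X)) := (dclass_map_iff adj).1 ((hl _).1 (.refl _))
    exact ⟨hσ, (hσ _).2 ((dclass_obj_obj_iff_kernel_counit adj η).1 hX).1⟩
  · rintro ⟨hσ, hF⟩
    have hX : DClass σ (e.obj (l.obj X)) :=
      (dclass_obj_obj_iff_kernel_counit adj η).2 ⟨(hσ _).1 hF, (hσ _).1 (.refl X)⟩
    exact hσ.map adj ((hσ _).2 hX)

end Silting

/-- Let `(B, A, i, e, l)` be a cleft extension of abelian categories with
arbitrary coproducts, and suppose `e` has a right adjoint functor `r`. Let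
`P₁ ⟶σ P₀ ⟶π Bo ⟶ 0` be a projective presentation of `Bo` in `B`. Then `l(Bo)` is silting in
`A` with respect to `l(σ)` if and only if `Bo` is silting in `B` with respect to `σ` and
`F(Bo) ∈ Gen(Bo)`, where `F(Bo) := e(ker(μ_{i(Bo)}))` and `μ` is the counit of `(l, e)`. -/
theorem stmt16 {A : Type u₁} {B : Type u₂} [Category.{v} A] [Category.{v} B]
    [Abelian A] [Abelian B] [EnoughProjectives A] [EnoughProjectives B]
    [HasCoproducts.{v} A] [HasCoproducts.{v} B]
    (i : B ⥤ A) (e : A ⥤ B) (l : B ⥤ A) [e.Faithful]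
    [PreservesFiniteLimits e] [PreservesFiniteColimits e]
    (adj : l ⊣ e) (η : i ⋙ e ≅ 𝟭 B)
    (r : B ⥤ A) (adjr : e ⊣ r)
    {P₁ P₀ Bo : B} (σ : P₁ ⟶ P₀) (π : P₀ ⟶ Bo)
    (hP₁ : Projective P₁) (hP₀ : Projective P₀) [Epi π]
    (w : σ ≫ π = 0) (hexact : (ShortComplex.mk σ π w).Exact) :
    IsSilting (l.map σ) (l.obj Bo) ↔
      IsSilting σ Bo ∧ Gen Bo (e.obj (kernel (adj.counit.app (i.obj Bo)))) := by
  have := adjr.isLeftAdjoint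
  exact stmt16_general adj η
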